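/- Let μ, α_max, v̄, k, q1_max be real numbers with k ≥ 0 and ε := μ − α_max − v̄ > 0 (Condition 1). Let α : ℝ → ℝ be continuous with 0 ≤ α(t) ≤ α_max and v : ℝ → ℝ integrable with 0 ≤ v(t) ≤ v̄ for all t ≥ 0. Let q1(0) ≥ 0, q2(0) ≥ 0 satisfy Condition 2: q1_max − q1(0) ≥ (k/(2ε))·q2(0)². Suppose q2 : ℝ → ℝ is continuous with q2(t) = q2(0) + ∫₀ᵗ (v(τ) + α(τ) − μ) dτ for t ∈ [0, T2], where T2 is the first time q2 vanishes, and q2(t) = 0 for t ≥ T2; and suppose q1 : ℝ → ℝ satisfies q1(t) = q1(0) + ∫₀ᵗ k·q2(τ) dτ for t ∈ [0, T2] and q1(t) = q1(T2) + ∫_{T2}ᵗ (v(τ) + α(τ) − μ) dτ for t ≥ T2. Then there exists T1 with q1(T1) = 0, q2(T1) = 0, and T1 ≤ q1(0)/ε + q2(0)/ε + (k/2)·(q2(0)/ε)², and moreover q1(t) ≤ q1_max for all t ∈ [0, T2]. -/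

import Mathlib

open MeasureTheory intervalIntegral

/-!
Both phases are driven by the same net inflow `w = v + α - μ ≤ -ε`. In the first phase `q2` stays
below the line `q2 0 - ε * t`, so it vanishes by time `q2 0 / ε`, and the area under it, which `q1`
collects with weight `k`, is at most the area `(q2 0)² / (2ε)` of the triangle below that line. In
the second phase `q1` itself decreases at rate at least `ε`, so it vanishes within a further time
`q1 T2 / ε`.
-/

theorem integral_le_sq_div_two_mul {f : ℝ → ℝ} {c ε t : ℝ} (hε : 0 < ε) (ht : 0 ≤ t)
    (hf : IntervalIntegrable f volume 0 t) (hle : ∀ τ ∈ Set.Icc 0 t, f τ ≤ c - ε * τ) :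
    ∫ τ in (0 : ℝ)..t, f τ ≤ c ^ 2 / (2 * ε) := by
  have hline : Continuous fun τ : ℝ => c - ε * τ := by fun_prop
  calc ∫ τ in (0 : ℝ)..t, f τ
      ≤ ∫ τ in (0 : ℝ)..t, (c - ε * τ) :=
        integral_mono_on ht hf (hline.intervalIntegrable 0 t) hle
    _ = (c ^ 2 - (c - ε * t) ^ 2) / (2 * ε) := by
        rw [integral_comp_sub_mul (fun x => x) hε.ne', integral_id, smul_eq_mul]
        field_simp
        ring
    _ ≤ c ^ 2 / (2 * ε) := by
        gcongr
        exact sub_le_self _ (sq_nonneg _)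

/-- The integral (Carathéodory) form on `s` of the differential equation `q' = w`, started at time
`t₀`; the queue lengths satisfy it with rates that need only be integrable. -/
def HasRateOn {E : Type*} [NormedAddCommGroup E] [NormedSpace ℝ E]
    (q w : ℝ → E) (t₀ : ℝ) (s : Set ℝ) : Prop :=
  ∀ t ∈ s, q t = q t₀ + ∫ τ in t₀..t, w τ

namespace HasRateOn

section NormedSpace

variable {E : Type*} [NormedAddCommGroup E] [NormedSpace ℝ E] {q w : ℝ → E} {t₀ : ℝ} {s : Set ℝ}

theorem continuousOn (hq : HasRateOn q w t₀ s)
    (hw : ∀ a b, IntervalIntegrable w volume a b) : ContinuousOn q s :=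
  (continuous_const.add (continuous_primitive hw t₀)).continuousOn.congr hq

theorem sub_eq_integral (hq : HasRateOn q w t₀ s) (hw : ∀ a b, IntervalIntegrable w volume a b)
    {a b : ℝ} (ha : a ∈ s) (hb : b ∈ s) : q b - q a = ∫ τ in a..b, w τ := by
  rw [hq a ha, hq b hb, add_sub_add_left_eq_sub, integral_interval_sub_left (hw t₀ b) (hw t₀ a)]

end NormedSpace

variable {q w : ℝ → ℝ} {t₀ : ℝ} {s : Set ℝ}

theorem le_add_mul_sub {a b c : ℝ} (hq : HasRateOn q w t₀ s)
    (hw : ∀ a b, IntervalIntegrable w volume a b) (ha : a ∈ s) (hb : b ∈ s) (hab : a ≤ b)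
    (hwc : ∀ t ∈ Set.Icc a b, w t ≤ c) : q b ≤ q a + c * (b - a) := by
  have hint : ∫ τ in a..b, w τ ≤ ∫ _ in a..b, c :=
    integral_mono_on hab (hw a b) intervalIntegrable_const hwc
  rw [intervalIntegral.integral_const, smul_eq_mul, ← hq.sub_eq_integral hw ha hb] at hint
  linarith

theorem antitoneOn (hq : HasRateOn q w t₀ s) (hw : ∀ a b, IntervalIntegrable w volume a b)
    (hs : s.OrdConnected) (hw_nonpos : ∀ t ∈ s, w t ≤ 0) : AntitoneOn q s := by
  intro a ha b hb hab
  simpa only [zero_mul, add_zero] using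
    hq.le_add_mul_sub hw ha hb hab fun t ht => hw_nonpos t (hs.out ha hb ht)

theorem exists_mem_Icc_eq_zero {ε : ℝ} (hq : HasRateOn q w t₀ (Set.Ici t₀))
    (hw : ∀ a b, IntervalIntegrable w volume a b) (hε : 0 < ε) (hwε : ∀ t ∈ Set.Ici t₀, w t ≤ -ε)
    (hq_nonneg : 0 ≤ q t₀) : ∃ T ∈ Set.Icc t₀ (t₀ + q t₀ / ε), q T = 0 := by
  have hle : t₀ ≤ t₀ + q t₀ / ε := le_add_of_nonneg_right (div_nonneg hq_nonneg hε.le)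
  have hend : q (t₀ + q t₀ / ε) ≤ 0 :=
    calc q (t₀ + q t₀ / ε)
        ≤ q t₀ + -ε * (t₀ + q t₀ / ε - t₀) :=
          hq.le_add_mul_sub hw Set.self_mem_Ici hle hle fun t ht => hwε t ht.1
      _ = 0 := by field_simp; ring
  exact intermediate_value_Icc' hle ((hq.continuousOn hw).mono Set.Icc_subset_Ici_self)
    ⟨hend, hq_nonneg⟩

theorem le_add_mul_sq {p : ℝ → ℝ} {k c ε T t : ℝ}
    (hp : HasRateOn p (fun τ => k * q τ) 0 (Set.Icc 0 T)) (hk : 0 ≤ k) (hε : 0 < ε)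
    (hq : ContinuousOn q (Set.Icc 0 T)) (hline : ∀ t ∈ Set.Icc 0 T, q t ≤ c - ε * t)
    (ht : t ∈ Set.Icc 0 T) : p t ≤ p 0 + k / (2 * ε) * c ^ 2 := by
  have hsub : Set.Icc 0 t ⊆ Set.Icc 0 T := Set.Icc_subset_Icc_right ht.2
  have harea : ∫ τ in (0 : ℝ)..t, q τ ≤ c ^ 2 / (2 * ε) :=
    integral_le_sq_div_two_mul hε ht.1 ((hq.mono hsub).intervalIntegrable_of_Icc ht.1)
      fun τ hτ => hline τ (hsub hτ)
  calc p t = p 0 + k * ∫ τ in (0 : ℝ)..t, q τ := by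
        rw [hp t ht, intervalIntegral.integral_const_mul]
    _ ≤ p 0 + k * (c ^ 2 / (2 * ε)) := by gcongr
    _ = p 0 + k / (2 * ε) * c ^ 2 := by ring

end HasRateOn

theorem stmt6_general {k q1max ε T2 : ℝ} {w q1 q2 : ℝ → ℝ} (hk : 0 ≤ k) (hε : 0 < ε)
    (hw : ∀ a b, IntervalIntegrable w volume a b) (hwε : ∀ t, 0 ≤ t → w t ≤ -ε)
    (hq10 : 0 ≤ q1 0) (hcond2 : q1max - q1 0 ≥ k / (2 * ε) * q2 0 ^ 2) (hT2 : 0 ≤ T2)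
    (hq2 : HasRateOn q2 w 0 (Set.Icc 0 T2)) (hq2zero : ∀ t, T2 ≤ t → q2 t = 0)
    (hq1 : HasRateOn q1 (fun τ => k * q2 τ) 0 (Set.Icc 0 T2))
    (hq1' : HasRateOn q1 w T2 (Set.Ici T2)) :
    (∃ T1 : ℝ, q1 T1 = 0 ∧ q2 T1 = 0 ∧
      T1 ≤ q1 0 / ε + q2 0 / ε + k / 2 * (q2 0 / ε) ^ 2) ∧
    ∀ t ∈ Set.Icc 0 T2, q1 t ≤ q1max := by
  have hT2mem : T2 ∈ Set.Icc 0 T2 := Set.right_mem_Icc.2 hT2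
  have hline : ∀ t ∈ Set.Icc 0 T2, q2 t ≤ q2 0 - ε * t := fun t ht => by
    linarith [hq2.le_add_mul_sub hw (Set.left_mem_Icc.2 hT2) ht ht.1 fun τ hτ => hwε τ hτ.1]
  have hq2_nonneg : ∀ t ∈ Set.Icc 0 T2, 0 ≤ q2 t := fun t ht =>
    (hq2zero T2 le_rfl).ge.trans <| hq2.antitoneOn hw Set.ordConnected_Icc
      (fun τ hτ => (hwε τ hτ.1).trans (neg_nonpos.2 hε.le)) ht hT2mem ht.2
  have hq1_le : ∀ t ∈ Set.Icc 0 T2, q1 t ≤ q1 0 + k / (2 * ε) * q2 0 ^ 2 := fun _ =>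
    hq1.le_add_mul_sq hk hε (hq2.continuousOn hw) hline
  have hq1T2_nonneg : 0 ≤ q1 T2 := (hq1 T2 hT2mem).symm ▸
    add_nonneg hq10 (integral_nonneg hT2 fun τ hτ => mul_nonneg hk (hq2_nonneg τ hτ))
  obtain ⟨T1, ⟨hT2T1, hT1⟩, hq1T1⟩ := hq1'.exists_mem_Icc_eq_zero hw hε
    (fun t ht => hwε t (hT2.trans ht)) hq1T2_nonneg
  refine ⟨⟨T1, hq1T1, hq2zero T1 hT2T1, ?_⟩, fun t ht => by linarith [hq1_le t ht]⟩
  have hT2_le : T2 ≤ q2 0 / ε := by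
    rw [le_div_iff₀' hε]
    linarith [hline T2 hT2mem, hq2_nonneg T2 hT2mem]
  calc T1 ≤ T2 + q1 T2 / ε := hT1
    _ ≤ q2 0 / ε + (q1 0 + k / (2 * ε) * q2 0 ^ 2) / ε := by
        gcongr
        exact hq1_le T2 hT2mem
    _ = q1 0 / ε + q2 0 / ε + k / 2 * (q2 0 / ε) ^ 2 := by field_simp; ring

/-- main theorem of the paper. Under Condition 1
(`ε = μ - α_max - v̄ > 0`) and Condition 2
(`q1_max - q1 0 ≥ (k/(2ε)) * (q2 0)²`), the defender's switching strategy
drives the game state to zero: there is a time `T1` with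
`q1 T1 = 0`, `q2 T1 = 0` and
`T1 ≤ q1 0 / ε + q2 0 / ε + (k/2) * (q2 0 / ε)²`, and the phase constraint
`q1 t ≤ q1_max` holds throughout the first phase `[0, T2]`. -/
theorem stmt6 (μ αmax vbar k q1max ε : ℝ) (hk : 0 ≤ k)
    (hεdef : ε = μ - αmax - vbar) (hε : 0 < ε)
    (α v : ℝ → ℝ) (hαcont : Continuous α)
    (hα : ∀ t : ℝ, 0 ≤ t → 0 ≤ α t ∧ α t ≤ αmax)
    (hvint : ∀ a b : ℝ, IntervalIntegrable v volume a b)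
    (hv : ∀ t : ℝ, 0 ≤ t → 0 ≤ v t ∧ v t ≤ vbar)
    (q1 q2 : ℝ → ℝ)
    (hq10 : 0 ≤ q1 0) (hq20 : 0 ≤ q2 0)
    (hcond2 : q1max - q1 0 ≥ (k / (2 * ε)) * (q2 0) ^ 2)
    (hq2cont : Continuous q2)
    (T2 : ℝ) (hT2 : 0 ≤ T2)
    (hq2int : IntervalIntegrable q2 volume 0 T2)
    (hq2eq : ∀ t ∈ Set.Icc (0:ℝ) T2,
      q2 t = q2 0 + ∫ τ in (0:ℝ)..t, (v τ + α τ - μ))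
    (hq2T2 : q2 T2 = 0)
    (hT2first : ∀ t ∈ Set.Ico (0:ℝ) T2, q2 t ≠ 0)
    (hq2zero : ∀ t : ℝ, T2 ≤ t → q2 t = 0)
    (hq1eq1 : ∀ t ∈ Set.Icc (0:ℝ) T2,
      q1 t = q1 0 + ∫ τ in (0:ℝ)..t, k * q2 τ)
    (hq1eq2 : ∀ t : ℝ, T2 ≤ t → q1 t = q1 T2 + ∫ τ in T2..t, (v τ + α τ - μ)) :
    (∃ T1 : ℝ, q1 T1 = 0 ∧ q2 T1 = 0 ∧
      T1 ≤ q1 0 / ε + q2 0 / ε + (k / 2) * (q2 0 / ε) ^ 2) ∧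
    ∀ t ∈ Set.Icc (0:ℝ) T2, q1 t ≤ q1max := by
  have hw : ∀ a b, IntervalIntegrable (fun τ => v τ + α τ - μ) volume a b := fun a b =>
    ((hvint a b).add (hαcont.intervalIntegrable a b)).sub intervalIntegrable_const
  exact stmt6_general hk hε hw (fun t ht => by linarith [hα t ht, hv t ht]) hq10 hcond2 hT2
    hq2eq hq2zero hq1eq1 hq1eq2
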